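/- Let n ≥ 3, let R > 0, let b ∈ ℝ and C > 0, and let U be a positive harmonic function on E = {x ∈ ℝⁿ : ‖x‖ > R} satisfying |U(x) − 1 − b·‖x‖^{2-n}| ≤ C·‖x‖^{1-n} on E. Define the metric coefficients g_ij(x) = U(x)^{4/(n-2)} δ_ij on E. Then the ADM mass limit exists and equals 2b; that is, (1/(2(n-1)ω_{n-1})) · lim_{σ→∞} ∫_{{‖x‖=σ}} Σ_{i,j=1}^{n} (∂_i g_ij(x) − ∂_j g_ii(x)) · (x_j/σ) dμ(x) = 2b, where the integral is with respect to the (n-1)-dimensional Hausdorff measure μ on the sphere {‖x‖ = σ}. -/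

import Mathlib

open Filter MeasureTheory

/-- A function is harmonic on an open subset of `ℝⁿ` if it is smooth there and its
Euclidean Laplacian (the sum of its pure second partial derivatives) vanishes
identically. -/
def HarmonicOnSet {n : ℕ} (f : EuclideanSpace ℝ (Fin n) → ℝ)
    (Ω : Set (EuclideanSpace ℝ (Fin n))) : Prop :=
  ContDiffOn ℝ (⊤ : ℕ∞) f Ω ∧
    ∀ x ∈ Ω, ∑ i : Fin n,
      fderiv ℝ (fun y => fderiv ℝ f y (EuclideanSpace.single i (1:ℝ))) x
        (EuclideanSpace.single i (1:ℝ)) = 0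

/-- The conformally flat metric coefficients `g_ij = U^{4/(n-2)} δ_ij`. -/
noncomputable def confMetric (n : ℕ) (U : EuclideanSpace ℝ (Fin n) → ℝ)
    (x : EuclideanSpace ℝ (Fin n)) (i j : Fin n) : ℝ :=
  U x ^ ((4 : ℝ) / ((n : ℝ) - 2)) * (if i = j then 1 else 0)

theorem adm_sphere_pos (m : ℕ) :
    μH[(m : ℝ)] (Metric.sphere (0 : EuclideanSpace ℝ (Fin (m+1))) 1) ≠ 0 := by
  let P : EuclideanSpace ℝ (Fin (m+1)) →L[ℝ] (Fin m → ℝ) :=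
    ContinuousLinearMap.pi (fun i => EuclideanSpace.proj (𝕜 := ℝ) i.succ)
  have h := P.lipschitz.hausdorffMeasure_image_le (d := (m:ℝ)) (by positivity)
    (Metric.sphere (0 : EuclideanSpace ℝ (Fin (m+1))) 1)
  intro h0
  rw [h0, mul_zero] at h
  have hs : {y : Fin m → ℝ | ∑ i, y i ^ 2 < 1} ⊆
      P '' (Metric.sphere (0 : EuclideanSpace ℝ (Fin (m+1))) 1) := by
    intro y hy
    have hy' : ∑ i, y i ^ 2 < 1 := hy
    refine ⟨WithLp.toLp 2 (Fin.cons (Real.sqrt (1 - ∑ i, y i ^ 2)) y), ?_, ?_⟩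
    · rw [mem_sphere_zero_iff_norm, EuclideanSpace.norm_eq, Fin.sum_univ_succ]
      simp only [Fin.cons_zero, Fin.cons_succ, Real.norm_eq_abs, sq_abs]
      rw [Real.sq_sqrt (by linarith)]
      simp
    · ext i
      simp [P]
  have ho : IsOpen {y : Fin m → ℝ | ∑ i, y i ^ 2 < 1} :=
    isOpen_lt (by fun_prop) (by fun_prop)
  have hv := hausdorffMeasure_pi_real (ι := Fin m)
  rw [Fintype.card_fin] at hv
  have h1 := ho.measure_pos (μ := volume) ⟨0, by simp⟩
  rw [← hv] at h1
  exact absurd (h1.trans_le ((measure_mono hs).trans h)) (lt_irrefl _)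

theorem adm_sphere_fin (m : ℕ) :
    μH[(m : ℝ)] (Metric.sphere (0 : EuclideanSpace ℝ (Fin (m+1))) 1) ≠ ⊤ := by
  let J : Fin (m+1) → ℝ → (Fin m → ℝ) → EuclideanSpace ℝ (Fin (m+1)) :=
    fun i s y => WithLp.toLp 2 (i.insertNth (α := fun _ => ℝ) s y)
  let N : EuclideanSpace ℝ (Fin (m+1)) → EuclideanSpace ℝ (Fin (m+1)) := fun x => ‖x‖⁻¹ • x
  have hN : LipschitzOnWith 2 N {x | 1 ≤ ‖x‖} := by
    apply LipschitzOnWith.of_dist_le_mul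
    intro x hx y hy
    have hx' : 1 ≤ ‖x‖ := hx
    have hy' : 1 ≤ ‖y‖ := hy
    have e : N x - N y = ‖x‖⁻¹ • (x - y) + ((‖y‖ - ‖x‖) * ‖x‖⁻¹ * ‖y‖⁻¹) • y := by
      have : (‖y‖ - ‖x‖) * ‖x‖⁻¹ * ‖y‖⁻¹ = ‖x‖⁻¹ - ‖y‖⁻¹ := by field_simp
      rw [this, smul_sub, sub_smul]
      simp only [N]; abel
    rw [dist_eq_norm, dist_eq_norm, e]
    have hx1 : ‖x‖⁻¹ ≤ 1 := inv_le_one_of_one_le₀ hx'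
    have h1 : ‖‖x‖⁻¹ • (x - y)‖ ≤ ‖x - y‖ := by
      rw [norm_smul, norm_inv, norm_norm]
      exact mul_le_of_le_one_left (norm_nonneg _) hx1
    have h2 : ‖((‖y‖ - ‖x‖) * ‖x‖⁻¹ * ‖y‖⁻¹) • y‖ ≤ ‖x - y‖ := by
      rw [norm_smul, norm_mul, norm_mul, norm_inv, norm_inv, norm_norm, norm_norm,
        inv_mul_cancel_right₀ (by positivity)]
      have := abs_norm_sub_norm_le y x
      rw [norm_sub_rev] at this
      refine le_trans ?_ this
      exact mul_le_of_le_one_right (norm_nonneg _) hx1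
    refine (norm_add_le _ _).trans ?_
    push_cast
    linarith
  have hins : ∀ (i : Fin (m+1)) (s : ℝ), LipschitzWith 1 (fun y : Fin m → ℝ => i.insertNth (α := fun _ => ℝ) s y) := by
    intro i s
    apply LipschitzWith.of_dist_le_mul
    intro x y
    rw [NNReal.coe_one, one_mul, dist_pi_le_iff dist_nonneg, Fin.forall_iff_succAbove i]
    constructor
    · simp
    · intro j; simpa using dist_le_pi_dist x y j
  have hJ : ∀ i s, ∃ K, LipschitzWith K (J i s) := by
    intro i s
    exact ⟨_, (PiLp.lipschitzWith_toLp 2 (fun _ : Fin (m+1) => ℝ)).comp (hins i s)⟩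
  have hv := hausdorffMeasure_pi_real (ι := Fin m)
  rw [Fintype.card_fin] at hv
  let Q : Set (Fin m → ℝ) := Set.Icc (fun _ => -1) (fun _ => 1)
  have hQ : μH[(m:ℝ)] Q < ⊤ := by
    rw [hv]; exact isCompact_Icc.measure_lt_top
  have hface : ∀ i s, |s| = 1 → μH[(m:ℝ)] (N '' (J i s '' Q)) < ⊤ := by
    intro i s hs
    obtain ⟨K, hK⟩ := hJ i s
    have h1 := hK.hausdorffMeasure_image_le (d := (m:ℝ)) (by positivity) Q
    have hsub : J i s '' Q ⊆ {x | 1 ≤ ‖x‖} := by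
      rintro _ ⟨y, -, rfl⟩
      have := PiLp.norm_apply_le (J i s y) i
      simpa [J, hs] using this
    have h2 := (hN.mono hsub).hausdorffMeasure_image_le (d := (m:ℝ)) (by positivity)
    refine h2.trans_lt (ENNReal.mul_lt_top ?_ (h1.trans_lt (ENNReal.mul_lt_top ?_ hQ)))
    · exact ENNReal.rpow_lt_top_of_nonneg (by positivity) (by simp)
    · exact ENNReal.rpow_lt_top_of_nonneg (by positivity) (by simp)
  have hcov : Metric.sphere (0 : EuclideanSpace ℝ (Fin (m+1))) 1 ⊆
      ⋃ i : Fin (m+1), (N '' (J i 1 '' Q) ∪ N '' (J i (-1) '' Q)) := by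
    intro x hx
    rw [mem_sphere_zero_iff_norm] at hx
    obtain ⟨i, hi⟩ := Finite.exists_max (fun i => |x i|)
    have hpos : 0 < |x i| := by
      by_contra hcon
      have h0 : ∀ j, x j = 0 := fun j => abs_nonpos_iff.1 ((hi j).trans (not_lt.1 hcon))
      have : x = 0 := by ext j; simpa using h0 j
      rw [this, norm_zero] at hx
      norm_num at hx
    have key : ∀ s, |s| = 1 → x i = s * |x i| → x ∈ N '' (J i s '' Q) := by
      intro s hs hxs
      refine ⟨|x i|⁻¹ • x, ⟨fun j => |x i|⁻¹ * x (i.succAbove j), ?_, ?_⟩, ?_⟩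
      · have : ∀ j, |(|x i|⁻¹ * x (i.succAbove j))| ≤ 1 := by
          intro j
          rw [abs_mul, abs_inv, abs_abs, inv_mul_le_iff₀ hpos, mul_one]
          exact hi _
        exact ⟨fun j => (abs_le.1 (this j)).1, fun j => (abs_le.1 (this j)).2⟩
      · ext j
        revert j
        rw [Fin.forall_iff_succAbove i]
        constructor
        · simp only [J, Fin.insertNth_apply_same, PiLp.smul_apply, smul_eq_mul]
          rw [hxs, abs_mul, hs, abs_abs]; field_simp
        · intro j; simp [J]
      · simp only [N]
        rw [norm_smul, hx, mul_one, norm_inv, norm_abs_eq_norm, Real.norm_eq_abs, inv_inv,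
          smul_smul, mul_inv_cancel₀ hpos.ne', one_smul]
    rw [Set.mem_iUnion]
    refine ⟨i, ?_⟩
    rcases abs_cases (x i) with h | h
    · left; exact key 1 (by simp) (by rw [h.1]; ring)
    · right; exact key (-1) (by simp) (by rw [h.1]; ring)
  refine ((measure_mono hcov).trans_lt ?_).ne
  refine (measure_iUnion_le _).trans_lt ?_
  rw [tsum_fintype]
  refine ENNReal.sum_lt_top.2 fun i _ => ?_
  exact (measure_union_le _ _).trans_lt
    (ENNReal.add_lt_top.2 ⟨hface i 1 (by simp), hface i (-1) (by simp)⟩)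

open scoped Pointwise in
theorem adm_scaling (n : ℕ) (hn : 1 ≤ n) (σ : ℝ) (hσ : 0 < σ)
    (g : EuclideanSpace ℝ (Fin n) → ℝ) :
    ∫ x in Metric.sphere (0 : EuclideanSpace ℝ (Fin n)) σ, g x ∂(μH[(n:ℝ) - 1])
      = σ ^ ((n:ℝ) - 1) *
        ∫ x in Metric.sphere (0 : EuclideanSpace ℝ (Fin n)) 1, g (σ • x) ∂(μH[(n:ℝ) - 1]) := by
  have hd : (0:ℝ) ≤ (n:ℝ) - 1 := by
    have : (1:ℝ) ≤ n := by exact_mod_cast hn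
    linarith
  have he : MeasurableEmbedding (fun x : EuclideanSpace ℝ (Fin n) => σ • x) :=
    (Homeomorph.smulOfNeZero σ hσ.ne').measurableEmbedding
  have hm : (μH[(n:ℝ) - 1] : Measure (EuclideanSpace ℝ (Fin n))) =
      (ENNReal.ofReal (σ ^ ((n:ℝ) - 1))) •
        Measure.map (fun x : EuclideanSpace ℝ (Fin n) => σ • x) μH[(n:ℝ) - 1] := by
    ext s hs
    rw [Measure.smul_apply, he.map_apply]
    have : s = σ • ((fun x : EuclideanSpace ℝ (Fin n) => σ • x) ⁻¹' s) := by
      rw [Set.preimage_smul₀ hσ.ne', smul_inv_smul₀ hσ.ne']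
    conv_lhs => rw [this]
    rw [Measure.hausdorffMeasure_smul₀ hd hσ.ne', ENNReal.smul_def, smul_eq_mul, smul_eq_mul]
    congr 1
    rw [ENNReal.ofReal, ENNReal.coe_inj]
    ext
    rw [NNReal.coe_rpow, Real.coe_toNNReal _ (by positivity)]
    simp [abs_of_pos hσ]
  conv_lhs => rw [hm]
  rw [Measure.restrict_smul, integral_smul_measure, he.setIntegral_map,
    ENNReal.toReal_ofReal (by positivity), smul_eq_mul]
  congr 3
  ext x
  simp [norm_smul, abs_of_pos hσ, hσ.ne']

theorem adm_integrable {E : Type*} [NormedAddCommGroup E] [MeasurableSpace E]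
    [BorelSpace E] (ν : Measure E) (S : Set E) (hS : IsCompact S) (hfin : ν S ≠ ⊤)
    (g : E → ℝ) (hg : ContinuousOn g S) : IntegrableOn g S ν := by
  obtain ⟨M, hM⟩ := hS.exists_bound_of_continuousOn hg
  have hm : MeasurableSet S := hS.isClosed.measurableSet
  have : IsFiniteMeasure (ν.restrict S) := ⟨by simpa using hfin.lt_top⟩
  refine Integrable.of_bound (C := M) ?_ ?_
  · exact hg.aestronglyMeasurable_of_isCompact hS hm
  · exact (ae_restrict_iff' hm).2 (Eventually.of_forall hM)

theorem adm_param {E : Type*} [NormedAddCommGroup E] [MeasurableSpace E]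
    [BorelSpace E] (ν : Measure E) (S : Set E) (hS : IsCompact S) (hfin : ν S ≠ ⊤)
    (I : Set ℝ) (hI : IsOpen I) (F F' : ℝ → E → ℝ)
    (hd : ∀ t ∈ I, ∀ x ∈ S, HasDerivAt (fun s => F s x) (F' t x) t)
    (hF : ∀ t ∈ I, ContinuousOn (F t) S)
    (hF' : ContinuousOn (fun p : ℝ × E => F' p.1 p.2) (I ×ˢ S)) (t : ℝ) (ht : t ∈ I) :
    HasDerivAt (fun s => ∫ x in S, F s x ∂ν) (∫ x in S, F' t x ∂ν) t := by
  obtain ⟨ε, hε, hball⟩ := Metric.nhds_basis_closedBall.mem_iff.1 (hI.mem_nhds ht)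
  have hK : IsCompact (Metric.closedBall t ε ×ˢ S) := (isCompact_closedBall t ε).prod hS
  obtain ⟨M, hM⟩ := hK.exists_bound_of_continuousOn
    (hF'.mono (Set.prod_mono hball subset_rfl))
  have hm : MeasurableSet S := hS.isClosed.measurableSet
  have hc' : ContinuousOn (F' t) S := by
    refine hF'.comp (f := fun x => (t, x)) (by fun_prop) ?_
    intro x hx; exact ⟨ht, hx⟩
  refine (hasDerivAt_integral_of_dominated_loc_of_deriv_le (s := Metric.closedBall t ε)
    (bound := fun _ => M) (Metric.closedBall_mem_nhds t hε) ?_ ?_ ?_ ?_ ?_ ?_).2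
  · filter_upwards [hI.mem_nhds ht] with s hs
    exact (adm_integrable ν S hS hfin _ (hF s hs)).aestronglyMeasurable
  · exact adm_integrable ν S hS hfin _ (hF t ht)
  · exact (adm_integrable ν S hS hfin _ hc').aestronglyMeasurable
  · refine (ae_restrict_iff' hm).2 (Eventually.of_forall fun x hx s hs => ?_)
    exact hM (s, x) ⟨hs, hx⟩
  · exact adm_integrable ν S hS hfin _ continuousOn_const
  · refine (ae_restrict_iff' hm).2 (Eventually.of_forall fun x hx s hs => ?_)
    exact hd s (hball hs) x hx

theorem adm_exp_zero {n : ℕ}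
    (A : EuclideanSpace ℝ (Fin n) →L[ℝ] EuclideanSpace ℝ (Fin n))
    (x : EuclideanSpace ℝ (Fin n)) : NormedSpace.exp ((0:ℝ) • A) x = x := by
  have h : (0:ℝ) • A = 0 := by ext; simp
  rw [h, NormedSpace.exp_zero]
  rfl

theorem adm_exp_norm {n : ℕ} (A : EuclideanSpace ℝ (Fin n) →L[ℝ] EuclideanSpace ℝ (Fin n))
    (hA : ∀ x, inner ℝ x (A x) = 0) (t : ℝ) (x : EuclideanSpace ℝ (Fin n)) :
    ‖NormedSpace.exp (t • A) x‖ = ‖x‖ := by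
  have hd : ∀ s : ℝ, HasDerivAt (fun s : ℝ => NormedSpace.exp (s • A) x)
      (A (NormedSpace.exp (s • A) x)) s := by
    intro s
    have := (hasDerivAt_exp_smul_const' (𝕂 := ℝ) A s).clm_apply (hasDerivAt_const s x)
    simpa using this
  have hd2 : ∀ s : ℝ, HasDerivAt (fun s : ℝ => ‖NormedSpace.exp (s • A) x‖ ^ 2) 0 s := by
    intro s
    have := (hd s).norm_sq
    simpa [hA] using this
  have h := is_const_of_deriv_eq_zero (fun s => (hd2 s).differentiableAt)
    (fun s => (hd2 s).deriv) t 0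
  simp only [adm_exp_zero] at h
  exact (sq_eq_sq₀ (norm_nonneg _) (norm_nonneg _)).1 h

theorem adm_rot_invariant {n : ℕ} (d : ℝ)
    (A : EuclideanSpace ℝ (Fin n) →L[ℝ] EuclideanSpace ℝ (Fin n))
    (hA : ∀ x, inner ℝ x (A x) = 0) (t : ℝ) (g : EuclideanSpace ℝ (Fin n) → ℝ) :
    ∫ x in Metric.sphere (0 : EuclideanSpace ℝ (Fin n)) 1, g (NormedSpace.exp (t • A) x) ∂(μH[d])
    = ∫ x in Metric.sphere (0 : EuclideanSpace ℝ (Fin n)) 1, g x ∂(μH[d]) := by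
  let L : EuclideanSpace ℝ (Fin n) →ₗᵢ[ℝ] EuclideanSpace ℝ (Fin n) :=
    ⟨(NormedSpace.exp (t • A) : EuclideanSpace ℝ (Fin n) →L[ℝ] EuclideanSpace ℝ (Fin n)),
      adm_exp_norm A hA t⟩
  let e : EuclideanSpace ℝ (Fin n) ≃ₗᵢ[ℝ] EuclideanSpace ℝ (Fin n) := L.toLinearIsometryEquiv rfl
  have he : ∀ x, e x = NormedSpace.exp (t • A) x := fun x => rfl
  have hp := e.toIsometryEquiv.measurePreserving_hausdorffMeasure d
  have := hp.setIntegral_preimage_emb e.toHomeomorph.measurableEmbedding g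
    (Metric.sphere (0 : EuclideanSpace ℝ (Fin n)) 1)
  rw [← this]
  have hs : e.toIsometryEquiv ⁻¹' (Metric.sphere (0 : EuclideanSpace ℝ (Fin n)) 1)
      = Metric.sphere (0 : EuclideanSpace ℝ (Fin n)) 1 := by
    ext x; simp
  rw [hs]
  rfl

theorem adm_isOpen (n : ℕ) (R : ℝ) : IsOpen {x : EuclideanSpace ℝ (Fin n) | R < ‖x‖} :=
  isOpen_lt continuous_const continuous_norm

theorem adm_rot_zero {n : ℕ} (d : ℝ)
    (hfin : μH[d] (Metric.sphere (0 : EuclideanSpace ℝ (Fin n)) 1) ≠ ⊤)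
    (A : EuclideanSpace ℝ (Fin n) →L[ℝ] EuclideanSpace ℝ (Fin n))
    (hA : ∀ x, inner ℝ x (A x) = 0) (R σ : ℝ) (hR : 0 < R) (hσ : R < σ)
    (g : EuclideanSpace ℝ (Fin n) → ℝ)
    (hg : ContDiffOn ℝ 1 g {x : EuclideanSpace ℝ (Fin n) | R < ‖x‖}) :
    ∫ x in Metric.sphere (0 : EuclideanSpace ℝ (Fin n)) 1,
      fderiv ℝ g (σ • x) (A (σ • x)) ∂(μH[d]) = 0 := by
  have hσ0 : 0 < σ := hR.trans hσ
  have hmem : ∀ t : ℝ, ∀ x ∈ Metric.sphere (0 : EuclideanSpace ℝ (Fin n)) 1,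
      σ • NormedSpace.exp (t • A) x ∈ {x : EuclideanSpace ℝ (Fin n) | R < ‖x‖} := by
    intro t x hx
    rw [mem_sphere_zero_iff_norm] at hx
    simp [norm_smul, adm_exp_norm A hA, hx, abs_of_pos hσ0, hσ]
  have hexpd : ∀ (x : EuclideanSpace ℝ (Fin n)) (s : ℝ),
      HasDerivAt (fun s : ℝ => σ • NormedSpace.exp (s • A) x)
      (A (σ • NormedSpace.exp (s • A) x)) s := by
    intro x s
    have := ((hasDerivAt_exp_smul_const' (𝕂 := ℝ) A s).clm_apply
      (hasDerivAt_const s x)).fun_const_smul σ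
    simpa using this
  have hexpc : Continuous (fun p : ℝ × EuclideanSpace ℝ (Fin n) =>
      σ • NormedSpace.exp (p.1 • A) p.2) := by
    have h1 : Continuous (fun s : ℝ => (NormedSpace.exp (s • A) :
        EuclideanSpace ℝ (Fin n) →L[ℝ] EuclideanSpace ℝ (Fin n))) :=
      (differentiable_exp_smul_const ℝ A).continuous
    exact ((h1.comp continuous_fst).clm_apply continuous_snd).const_smul σ
  have hO := adm_isOpen n R
  have hder : ContinuousOn (fderiv ℝ g) {x : EuclideanSpace ℝ (Fin n) | R < ‖x‖} :=
    hg.continuousOn_fderiv_of_isOpen hO le_rfl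
  have h := adm_param (μH[d]) _ (isCompact_sphere (0 : EuclideanSpace ℝ (Fin n)) 1) hfin
    Set.univ isOpen_univ (fun t x => g (σ • NormedSpace.exp (t • A) x))
    (fun t x => fderiv ℝ g (σ • NormedSpace.exp (t • A) x) (A (σ • NormedSpace.exp (t • A) x)))
    (by
      intro t _ x hx
      have h1 : HasFDerivAt g _ (σ • NormedSpace.exp (t • A) x) :=
        ((hg.differentiableOn one_ne_zero).differentiableAt
          (hO.mem_nhds (hmem t x hx))).hasFDerivAt
      exact h1.comp_hasDerivAt t (hexpd x t))
    (by
      intro t _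
      refine hg.continuousOn.comp ?_ (hmem t)
      exact (hexpc.comp (Continuous.prodMk_right t)).continuousOn)
    (by
      refine ContinuousOn.clm_apply ?_ (A.continuous.comp hexpc).continuousOn
      refine hder.comp hexpc.continuousOn ?_
      rintro ⟨t, x⟩ ⟨_, hx⟩
      exact hmem t x hx) 0 trivial
  simp only [adm_rot_invariant d A hA _ (fun x => g (σ • x)), adm_exp_zero] at h
  exact h.unique (hasDerivAt_const _ _)

/-- generator of rotations -/
noncomputable def admA {n : ℕ} (i j : Fin n) :
    EuclideanSpace ℝ (Fin n) →L[ℝ] EuclideanSpace ℝ (Fin n) :=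
  (EuclideanSpace.proj (𝕜 := ℝ) i : EuclideanSpace ℝ (Fin n) →L[ℝ] ℝ).smulRight
      (EuclideanSpace.single j (1:ℝ))
    - (EuclideanSpace.proj (𝕜 := ℝ) j : EuclideanSpace ℝ (Fin n) →L[ℝ] ℝ).smulRight
      (EuclideanSpace.single i (1:ℝ))

theorem admA_apply {n : ℕ} (i j : Fin n) (x : EuclideanSpace ℝ (Fin n)) :
    admA i j x = x i • EuclideanSpace.single j (1:ℝ) - x j • EuclideanSpace.single i (1:ℝ) := by
  simp [admA]

theorem admA_skew {n : ℕ} (i j : Fin n) (x : EuclideanSpace ℝ (Fin n)) :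
    inner ℝ x (admA i j x) = 0 := by
  rw [admA_apply, inner_sub_right, inner_smul_right, inner_smul_right]
  simp [EuclideanSpace.inner_single_right]
  ring

theorem adm_sum_single {n : ℕ} (x : EuclideanSpace ℝ (Fin n)) :
    x = ∑ i, x i • EuclideanSpace.single i (1:ℝ) := by
  ext j
  simp [Finset.sum_apply, Pi.single_apply]

theorem adm_lin_sum {n : ℕ} (l : EuclideanSpace ℝ (Fin n) →L[ℝ] ℝ)
    (x : EuclideanSpace ℝ (Fin n)) :
    l x = ∑ i, x i * l (EuclideanSpace.single i (1:ℝ)) := by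
  conv_lhs => rw [adm_sum_single x]
  simp

theorem adm_bilin_sum {n : ℕ}
    (B : EuclideanSpace ℝ (Fin n) →L[ℝ] EuclideanSpace ℝ (Fin n) →L[ℝ] ℝ)
    (x : EuclideanSpace ℝ (Fin n)) :
    B x x = ∑ i, ∑ j, x i * x j *
      B (EuclideanSpace.single i (1:ℝ)) (EuclideanSpace.single j (1:ℝ)) := by
  rw [adm_lin_sum (B x) x, Finset.sum_comm]
  refine Finset.sum_congr rfl fun j _ => ?_
  have := adm_lin_sum (B.flip (EuclideanSpace.single j (1:ℝ))) x
  rw [ContinuousLinearMap.flip_apply] at this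
  rw [this, Finset.mul_sum]
  refine Finset.sum_congr rfl fun i _ => ?_
  rw [ContinuousLinearMap.flip_apply]; ring

theorem adm_algebra {n : ℕ}
    (B : EuclideanSpace ℝ (Fin n) →L[ℝ] EuclideanSpace ℝ (Fin n) →L[ℝ] ℝ)
    (l : EuclideanSpace ℝ (Fin n) →L[ℝ] ℝ) (x : EuclideanSpace ℝ (Fin n)) :
    ∑ i, ∑ j, (B (admA i j x) (admA i j x) + l (admA i j (admA i j x))) =
      2 * (‖x‖ ^ 2 * ∑ i, B (EuclideanSpace.single i (1:ℝ)) (EuclideanSpace.single i (1:ℝ))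
        - B x x - ((n:ℝ) - 1) * l x) := by
  set b : Fin n → Fin n → ℝ := fun i j =>
    B (EuclideanSpace.single i (1:ℝ)) (EuclideanSpace.single j (1:ℝ)) with hb
  set c : Fin n → ℝ := fun i => l (EuclideanSpace.single i (1:ℝ)) with hc
  have hterm : ∀ i j, (B (admA i j x) (admA i j x) + l (admA i j (admA i j x))) =
      x i ^ 2 * b j j + x j ^ 2 * b i i - x i * x j * b i j - x j * x i * b j i
      - x j * c j - x i * c i + (if i = j then x i * c j else 0)
      + (if i = j then x j * c i else 0) := by
    intro i j
    rw [admA_apply i j (admA i j x), admA_apply i j x]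
    simp only [map_sub, map_smul, sub_apply, smul_apply,
      smul_eq_mul, PiLp.sub_apply, PiLp.smul_apply, PiLp.single_apply, hb, hc]
    by_cases h : i = j
    · subst h; simp; ring
    · have h' : ¬ j = i := fun e => h e.symm
      simp [h, h']; ring
  simp only [hterm, Finset.sum_add_distrib, Finset.sum_sub_distrib, Finset.sum_ite_eq,
    Finset.mem_univ, if_true, Finset.sum_const, Finset.card_univ, Fintype.card_fin,
    nsmul_eq_mul]
  rw [adm_bilin_sum B x, adm_lin_sum l x, EuclideanSpace.norm_sq_eq]
  have h1 : ∑ i, ∑ j, x i ^ 2 * b j j = (∑ i, x i ^ 2) * ∑ i, b i i := by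
    rw [Finset.sum_mul_sum]
  have h2 : ∑ i, ∑ j, x j ^ 2 * b i i = (∑ i, x i ^ 2) * ∑ i, b i i := by
    rw [Finset.sum_comm, Finset.sum_mul_sum]
  have h3 : ∑ i, ∑ j, x j * x i * b j i = ∑ i, ∑ j, x i * x j * b i j := by
    rw [Finset.sum_comm]
  rw [h1, h2, h3, ← Finset.mul_sum]
  simp only [Real.norm_eq_abs, sq_abs, hb, hc]
  ring

theorem adm_sphere_lap {n : ℕ} (d : ℝ)
    (hfin : μH[d] (Metric.sphere (0 : EuclideanSpace ℝ (Fin n)) 1) ≠ ⊤)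
    (R σ : ℝ) (hR : 0 < R) (hσ : R < σ)
    (f : EuclideanSpace ℝ (Fin n) → ℝ)
    (hf : ContDiffOn ℝ 2 f {x : EuclideanSpace ℝ (Fin n) | R < ‖x‖}) :
    ∫ x in Metric.sphere (0 : EuclideanSpace ℝ (Fin n)) 1,
      (σ * ∑ i, fderiv ℝ (fderiv ℝ f) (σ • x)
          (EuclideanSpace.single i (1:ℝ)) (EuclideanSpace.single i (1:ℝ))
        - σ * fderiv ℝ (fderiv ℝ f) (σ • x) x x
        - ((n:ℝ) - 1) * fderiv ℝ f (σ • x) x) ∂(μH[d]) = 0 := by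
  have hσ0 : 0 < σ := hR.trans hσ
  have hO := adm_isOpen n R
  have hmem : ∀ x ∈ Metric.sphere (0 : EuclideanSpace ℝ (Fin n)) 1,
      σ • x ∈ {x : EuclideanSpace ℝ (Fin n) | R < ‖x‖} := by
    intro x hx
    rw [mem_sphere_zero_iff_norm] at hx
    simp [norm_smul, hx, abs_of_pos hσ0, hσ]
  have hf1 : ContDiffOn ℝ 1 (fderiv ℝ f) {x : EuclideanSpace ℝ (Fin n) | R < ‖x‖} :=
    hf.fderiv_of_isOpen hO (by norm_num)
  have hg : ∀ i j : Fin n, ContDiffOn ℝ 1 (fun y => fderiv ℝ f y (admA i j y))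
      {x : EuclideanSpace ℝ (Fin n) | R < ‖x‖} := fun i j =>
    hf1.clm_apply (admA i j).contDiff.contDiffOn
  have hgd : ∀ (i j : Fin n), ∀ y ∈ {x : EuclideanSpace ℝ (Fin n) | R < ‖x‖}, ∀ w,
      fderiv ℝ (fun y => fderiv ℝ f y (admA i j y)) y w =
        fderiv ℝ (fderiv ℝ f) y w (admA i j y) + fderiv ℝ f y (admA i j w) := by
    intro i j y hy w
    have h1 : DifferentiableAt ℝ (fderiv ℝ f) y :=
      (hf1.differentiableOn one_ne_zero).differentiableAt (hO.mem_nhds hy)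
    rw [fderiv_clm_apply h1 (admA i j).differentiableAt]
    simp [add_comm]
  have hgc : ∀ i j : Fin n, ContinuousOn (fderiv ℝ (fun y => fderiv ℝ f y (admA i j y)))
      {x : EuclideanSpace ℝ (Fin n) | R < ‖x‖} := fun i j =>
    (hg i j).continuousOn_fderiv_of_isOpen hO le_rfl
  have hcs : Continuous (fun x : EuclideanSpace ℝ (Fin n) => σ • x) := by fun_prop
  have hz : ∑ i : Fin n, ∑ j : Fin n, ∫ x in Metric.sphere (0 : EuclideanSpace ℝ (Fin n)) 1,
      fderiv ℝ (fun y => fderiv ℝ f y (admA i j y)) (σ • x) (admA i j (σ • x)) ∂(μH[d]) = 0 := by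
    refine Finset.sum_eq_zero fun i _ => Finset.sum_eq_zero fun j _ => ?_
    exact adm_rot_zero d hfin (admA i j) (admA_skew i j) R σ hR hσ _ (hg i j)
  have hint : ∀ i j : Fin n, IntegrableOn (fun x =>
      fderiv ℝ (fun y => fderiv ℝ f y (admA i j y)) (σ • x) (admA i j (σ • x)))
      (Metric.sphere (0 : EuclideanSpace ℝ (Fin n)) 1) (μH[d]) := by
    intro i j
    refine adm_integrable _ _ (isCompact_sphere _ _) hfin _ ?_
    refine ContinuousOn.clm_apply ((hgc i j).comp hcs.continuousOn hmem) ?_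
    exact ((admA i j).continuous.comp hcs).continuousOn
  have hz2 : ∫ x in Metric.sphere (0 : EuclideanSpace ℝ (Fin n)) 1, ∑ i : Fin n, ∑ j : Fin n,
      fderiv ℝ (fun y => fderiv ℝ f y (admA i j y)) (σ • x) (admA i j (σ • x)) ∂(μH[d]) = 0 := by
    rw [integral_finsetSum _ (fun i _ => integrable_finsetSum _ (fun j _ => hint i j))]
    rw [← hz]
    refine Finset.sum_congr rfl fun i _ => ?_
    rw [integral_finsetSum _ (fun j _ => hint i j)]
  have hm : MeasurableSet (Metric.sphere (0 : EuclideanSpace ℝ (Fin n)) 1) :=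
    Metric.isClosed_sphere.measurableSet
  have hz3 : ∫ x in Metric.sphere (0 : EuclideanSpace ℝ (Fin n)) 1, (2 * σ) *
      (σ * ∑ i, fderiv ℝ (fderiv ℝ f) (σ • x)
          (EuclideanSpace.single i (1:ℝ)) (EuclideanSpace.single i (1:ℝ))
        - σ * fderiv ℝ (fderiv ℝ f) (σ • x) x x
        - ((n:ℝ) - 1) * fderiv ℝ f (σ • x) x) ∂(μH[d]) = 0 := by
    rw [← hz2]
    refine setIntegral_congr_fun hm fun x hx => ?_
    have hx1 := mem_sphere_zero_iff_norm.1 hx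
    simp only [hgd _ _ _ (hmem x hx)]
    rw [adm_algebra, norm_smul, hx1, Real.norm_eq_abs, mul_one, sq_abs]
    simp only [map_smul, smul_apply, smul_eq_mul]
    ring
  rw [integral_const_mul] at hz3
  exact (mul_eq_zero.1 hz3).resolve_left (by positivity)

theorem adm_radial {n : ℕ} (d : ℝ)
    (hfin : μH[d] (Metric.sphere (0 : EuclideanSpace ℝ (Fin n)) 1) ≠ ⊤)
    (R : ℝ) (hR : 0 < R)
    (f : EuclideanSpace ℝ (Fin n) → ℝ)
    (hf : ContDiffOn ℝ 1 f {x : EuclideanSpace ℝ (Fin n) | R < ‖x‖}) (σ : ℝ) (hσ : R < σ) :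
    HasDerivAt (fun s : ℝ => ∫ x in Metric.sphere (0 : EuclideanSpace ℝ (Fin n)) 1,
      f (s • x) ∂(μH[d])) (∫ x in Metric.sphere (0 : EuclideanSpace ℝ (Fin n)) 1,
      fderiv ℝ f (σ • x) x ∂(μH[d])) σ := by
  have hO := adm_isOpen n R
  have hmem : ∀ s ∈ Set.Ioi R, ∀ x ∈ Metric.sphere (0 : EuclideanSpace ℝ (Fin n)) 1,
      s • x ∈ {x : EuclideanSpace ℝ (Fin n) | R < ‖x‖} := by
    intro s hs x hx
    rw [mem_sphere_zero_iff_norm] at hx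
    simp [norm_smul, hx, abs_of_pos (hR.trans hs), Set.mem_Ioi.1 hs]
  refine adm_param (μH[d]) _ (isCompact_sphere _ _) hfin (Set.Ioi R) isOpen_Ioi
    (fun s x => f (s • x)) (fun s x => fderiv ℝ f (s • x) x) ?_ ?_ ?_ σ hσ
  · intro t ht x hx
    have h1 : HasFDerivAt f _ (t • x) :=
      ((hf.differentiableOn one_ne_zero).differentiableAt
        (hO.mem_nhds (hmem t ht x hx))).hasFDerivAt
    have h2 : HasDerivAt (fun s : ℝ => s • x) x t := by
      simpa using (hasDerivAt_id t).smul_const x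
    exact h1.comp_hasDerivAt t h2
  · intro t ht
    exact hf.continuousOn.comp (by fun_prop) (hmem t ht)
  · refine ContinuousOn.clm_apply ?_ (by fun_prop)
    refine (hf.continuousOn_fderiv_of_isOpen hO le_rfl).comp (by fun_prop) ?_
    rintro ⟨t, x⟩ ⟨ht, hx⟩
    exact hmem t ht x hx

theorem adm_radial2 {n : ℕ} (d : ℝ)
    (hfin : μH[d] (Metric.sphere (0 : EuclideanSpace ℝ (Fin n)) 1) ≠ ⊤)
    (R : ℝ) (hR : 0 < R)
    (f : EuclideanSpace ℝ (Fin n) → ℝ)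
    (hf : ContDiffOn ℝ 2 f {x : EuclideanSpace ℝ (Fin n) | R < ‖x‖}) (σ : ℝ) (hσ : R < σ) :
    HasDerivAt (fun s : ℝ => ∫ x in Metric.sphere (0 : EuclideanSpace ℝ (Fin n)) 1,
      fderiv ℝ f (s • x) x ∂(μH[d])) (∫ x in Metric.sphere (0 : EuclideanSpace ℝ (Fin n)) 1,
      fderiv ℝ (fderiv ℝ f) (σ • x) x x ∂(μH[d])) σ := by
  have hO := adm_isOpen n R
  have hf1 : ContDiffOn ℝ 1 (fderiv ℝ f) {x : EuclideanSpace ℝ (Fin n) | R < ‖x‖} :=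
    hf.fderiv_of_isOpen hO (by norm_num)
  have hmem : ∀ s ∈ Set.Ioi R, ∀ x ∈ Metric.sphere (0 : EuclideanSpace ℝ (Fin n)) 1,
      s • x ∈ {x : EuclideanSpace ℝ (Fin n) | R < ‖x‖} := by
    intro s hs x hx
    rw [mem_sphere_zero_iff_norm] at hx
    simp [norm_smul, hx, abs_of_pos (hR.trans hs), Set.mem_Ioi.1 hs]
  refine adm_param (μH[d]) _ (isCompact_sphere _ _) hfin (Set.Ioi R) isOpen_Ioi
    (fun s x => fderiv ℝ f (s • x) x) (fun s x => fderiv ℝ (fderiv ℝ f) (s • x) x x)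
    ?_ ?_ ?_ σ hσ
  · intro t ht x hx
    have h1 : HasFDerivAt (fderiv ℝ f) _ (t • x) :=
      ((hf1.differentiableOn one_ne_zero).differentiableAt
        (hO.mem_nhds (hmem t ht x hx))).hasFDerivAt
    have h2 : HasDerivAt (fun s : ℝ => s • x) x t := by
      simpa using (hasDerivAt_id t).smul_const x
    have h3 : HasDerivAt (fun s : ℝ => fderiv ℝ f (s • x))
      (fderiv ℝ (fderiv ℝ f) (t • x) x) t := h1.comp_hasDerivAt t h2
    exact (ContinuousLinearMap.apply ℝ ℝ x).hasFDerivAt.comp_hasDerivAt t h3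
  · intro t ht
    exact (hf1.continuousOn.comp (by fun_prop) (hmem t ht)).clm_apply (by fun_prop)
  · refine ContinuousOn.clm_apply (ContinuousOn.clm_apply ?_ (by fun_prop)) (by fun_prop)
    refine (hf1.continuousOn_fderiv_of_isOpen hO le_rfl).comp (by fun_prop) ?_
    rintro ⟨t, x⟩ ⟨ht, hx⟩
    exact hmem t ht x hx

theorem adm_flux {n : ℕ} (d : ℝ)
    (hfin : μH[d] (Metric.sphere (0 : EuclideanSpace ℝ (Fin n)) 1) ≠ ⊤)
    (R : ℝ) (hR : 0 < R)
    (f : EuclideanSpace ℝ (Fin n) → ℝ)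
    (hf : ContDiffOn ℝ 2 f {x : EuclideanSpace ℝ (Fin n) | R < ‖x‖}) (σ : ℝ) (hσ : R < σ) :
    HasDerivAt (fun s : ℝ => s ^ ((n:ℝ) - 1) *
      ∫ x in Metric.sphere (0 : EuclideanSpace ℝ (Fin n)) 1, fderiv ℝ f (s • x) x ∂(μH[d]))
      (σ ^ ((n:ℝ) - 1) * ∫ x in Metric.sphere (0 : EuclideanSpace ℝ (Fin n)) 1,
        ∑ i, fderiv ℝ (fderiv ℝ f) (σ • x)
          (EuclideanSpace.single i (1:ℝ)) (EuclideanSpace.single i (1:ℝ)) ∂(μH[d])) σ := by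
  have hσ0 : 0 < σ := hR.trans hσ
  have hO := adm_isOpen n R
  have hmem : ∀ x ∈ Metric.sphere (0 : EuclideanSpace ℝ (Fin n)) 1,
      σ • x ∈ {x : EuclideanSpace ℝ (Fin n) | R < ‖x‖} := by
    intro x hx
    rw [mem_sphere_zero_iff_norm] at hx
    simp [norm_smul, hx, abs_of_pos hσ0, hσ]
  have hf1 : ContDiffOn ℝ 1 (fderiv ℝ f) {x : EuclideanSpace ℝ (Fin n) | R < ‖x‖} :=
    hf.fderiv_of_isOpen hO (by norm_num)
  have hc1 : ContinuousOn (fun x => fderiv ℝ f (σ • x))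
      (Metric.sphere (0 : EuclideanSpace ℝ (Fin n)) 1) :=
    hf1.continuousOn.comp (by fun_prop) hmem
  have hc2 : ContinuousOn (fun x => fderiv ℝ (fderiv ℝ f) (σ • x))
      (Metric.sphere (0 : EuclideanSpace ℝ (Fin n)) 1) :=
    (hf1.continuousOn_fderiv_of_isOpen hO le_rfl).comp (by fun_prop) hmem
  have I1 : IntegrableOn (fun x => fderiv ℝ f (σ • x) x)
      (Metric.sphere (0 : EuclideanSpace ℝ (Fin n)) 1) (μH[d]) :=
    adm_integrable _ _ (isCompact_sphere _ _) hfin _ (hc1.clm_apply (by fun_prop))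
  have I2 : IntegrableOn (fun x => fderiv ℝ (fderiv ℝ f) (σ • x) x x)
      (Metric.sphere (0 : EuclideanSpace ℝ (Fin n)) 1) (μH[d]) :=
    adm_integrable _ _ (isCompact_sphere _ _) hfin _
      ((hc2.clm_apply (by fun_prop)).clm_apply (by fun_prop))
  have I3 : IntegrableOn (fun x => ∑ i, fderiv ℝ (fderiv ℝ f) (σ • x)
          (EuclideanSpace.single i (1:ℝ)) (EuclideanSpace.single i (1:ℝ)))
      (Metric.sphere (0 : EuclideanSpace ℝ (Fin n)) 1) (μH[d]) :=
    adm_integrable _ _ (isCompact_sphere _ _) hfin _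
      (continuousOn_finsetSum _ fun i _ =>
        (hc2.clm_apply continuousOn_const).clm_apply continuousOn_const)
  have h := adm_sphere_lap d hfin R σ hR hσ f hf
  have I32 : IntegrableOn (fun x => σ * ∑ i, fderiv ℝ (fderiv ℝ f) (σ • x)
          (EuclideanSpace.single i (1:ℝ)) (EuclideanSpace.single i (1:ℝ))
        - σ * fderiv ℝ (fderiv ℝ f) (σ • x) x x)
      (Metric.sphere (0 : EuclideanSpace ℝ (Fin n)) 1) (μH[d]) :=
    (I3.const_mul σ).sub (I2.const_mul σ)
  rw [integral_sub I32 (I1.const_mul _),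
    integral_sub (I3.const_mul σ) (I2.const_mul σ), integral_const_mul, integral_const_mul,
    integral_const_mul] at h
  have h2 := (Real.hasDerivAt_rpow_const (x := σ) (p := (n:ℝ) - 1) (Or.inl hσ0.ne')).mul
    (adm_radial2 d hfin R hR f hf σ hσ)
  refine h2.congr_deriv ?_
  have e : σ ^ ((n:ℝ) - 1) = σ * σ ^ ((n:ℝ) - 1 - 1) := by
    rw [Real.rpow_sub_one hσ0.ne' ((n:ℝ) - 1)]; field_simp
  rw [e]
  linear_combination (- σ ^ ((n:ℝ) - 1 - 1)) * h

theorem adm_mono_lim (k ω β R : ℝ) (hk : 0 < k) (hR : 0 < R) (F H : ℝ → ℝ)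
    (hF : ∀ σ, R < σ → HasDerivAt F (σ ^ (-k - 1) * H σ) σ)
    (hH : MonotoneOn H (Set.Ioi R))
    (hlim : Tendsto (fun σ : ℝ => σ ^ k * (F σ - ω)) atTop (nhds β)) :
    Tendsto H atTop (nhds (-k * β)) := by
  have hp0 : Tendsto (fun σ : ℝ => σ ^ (-k)) atTop (nhds 0) := tendsto_rpow_neg_atTop hk
  have hFω : Tendsto F atTop (nhds ω) := by
    have h1 := (hp0.mul hlim).const_add ω
    rw [zero_mul, add_zero] at h1
    refine h1.congr' ?_
    filter_upwards [eventually_gt_atTop 0] with σ hσ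
    rw [← mul_assoc, ← Real.rpow_add hσ, neg_add_cancel, Real.rpow_zero]; ring
  have hΦ : ∀ h : ℝ, Tendsto (fun σ : ℝ => F σ + h / k * σ ^ (-k)) atTop (nhds ω) := by
    intro h
    simpa using hFω.add (hp0.const_mul (h / k))
  have hΦd : ∀ h σ : ℝ, R < σ → HasDerivAt (fun σ : ℝ => F σ + h / k * σ ^ (-k))
      (σ ^ (-k - 1) * (H σ - h)) σ := by
    intro h σ hσ
    have h0 : 0 < σ := hR.trans hσ
    have h2 := (hF σ hσ).add
      ((Real.hasDerivAt_rpow_const (x := σ) (p := -k) (Or.inl h0.ne')).const_mul (h / k))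
    refine h2.congr_deriv ?_
    field_simp
    ring
  have hpk : ∀ σ : ℝ, 0 < σ → σ ^ k * σ ^ (-k) = 1 := by
    intro σ hσ
    rw [← Real.rpow_add hσ, add_neg_cancel, Real.rpow_zero]
  have upper : ∀ σ0, R < σ0 → H σ0 ≤ -k * β := by
    intro σ0 h0
    have hm : MonotoneOn (fun σ : ℝ => F σ + H σ0 / k * σ ^ (-k)) (Set.Ici σ0) := by
      refine monotoneOn_of_deriv_nonneg (convex_Ici σ0) ?_ ?_ ?_
      · intro σ hσ
        exact (hΦd _ σ (h0.trans_le hσ)).continuousAt.continuousWithinAt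
      · intro σ hσ
        rw [interior_Ici] at hσ
        exact (hΦd _ σ (h0.trans hσ)).differentiableAt.differentiableWithinAt
      · intro σ hσ
        rw [interior_Ici] at hσ
        have hσ' : σ0 < σ := hσ
        rw [(hΦd _ σ (h0.trans hσ')).deriv]
        have : 0 < σ := (hR.trans h0).trans hσ'
        have h3 : H σ0 ≤ H σ := hH h0 (h0.trans hσ') hσ'.le
        exact mul_nonneg (by positivity) (by linarith)
    have hle : ∀ σ, σ0 ≤ σ → F σ + H σ0 / k * σ ^ (-k) ≤ ω := by
      intro σ hσ
      refine ge_of_tendsto (hΦ (H σ0)) ?_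
      filter_upwards [eventually_ge_atTop σ] with τ hτ
      exact hm hσ (hσ.trans hτ) hτ
    have : β ≤ - (H σ0 / k) := by
      refine le_of_tendsto hlim ?_
      filter_upwards [eventually_ge_atTop σ0] with σ hσ
      have hs : 0 < σ := (hR.trans h0).trans_le hσ
      have h3 := hle σ hσ
      have h4 : σ ^ k * (F σ - ω) ≤ σ ^ k * (- (H σ0 / k * σ ^ (-k))) :=
        mul_le_mul_of_nonneg_left (by linarith) (by positivity)
      have h5 : σ ^ k * (- (H σ0 / k * σ ^ (-k))) = - (H σ0 / k) := by
        linear_combination (- (H σ0 / k)) * hpk σ hs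
      linarith
    have h6 : H σ0 / k ≤ -β := by linarith
    rw [div_le_iff₀ hk] at h6
    linarith
  have lower : ∀ c, c < -k * β → ∃ σ0, R < σ0 ∧ c < H σ0 := by
    intro c hc
    by_contra! hcon
    have hm : AntitoneOn (fun σ : ℝ => F σ + c / k * σ ^ (-k)) (Set.Ioi R) := by
      refine antitoneOn_of_deriv_nonpos (convex_Ioi R) ?_ ?_ ?_
      · intro σ hσ
        exact (hΦd _ σ hσ).continuousAt.continuousWithinAt
      · intro σ hσ
        rw [interior_Ioi] at hσ
        exact (hΦd _ σ hσ).differentiableAt.differentiableWithinAt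
      · intro σ hσ
        rw [interior_Ioi] at hσ
        have hσ' : R < σ := hσ
        rw [(hΦd _ σ hσ').deriv]
        have : 0 < σ := hR.trans hσ'
        have h3 := hcon σ hσ'
        exact mul_nonpos_of_nonneg_of_nonpos (by positivity) (by linarith)
    have hle : ∀ σ, R < σ → ω ≤ F σ + c / k * σ ^ (-k) := by
      intro σ hσ
      refine le_of_tendsto (hΦ c) ?_
      filter_upwards [eventually_ge_atTop σ] with τ hτ
      exact hm hσ (hσ.trans_le hτ) hτ
    have : - (c / k) ≤ β := by
      refine ge_of_tendsto hlim ?_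
      filter_upwards [eventually_gt_atTop R] with σ hσ
      have hs : 0 < σ := hR.trans hσ
      have h3 := hle σ hσ
      have h4 : σ ^ k * (- (c / k * σ ^ (-k))) ≤ σ ^ k * (F σ - ω) :=
        mul_le_mul_of_nonneg_left (by linarith) (by positivity)
      have h5 : σ ^ k * (- (c / k * σ ^ (-k))) = - (c / k) := by
        linear_combination (- (c / k)) * hpk σ hs
      linarith
    have h6 : -β ≤ c / k := by linarith
    rw [le_div_iff₀ hk] at h6
    linarith
  rw [tendsto_order]
  constructor
  · intro c hc
    obtain ⟨σ0, h0, h1⟩ := lower c hc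
    filter_upwards [eventually_ge_atTop σ0] with σ hσ
    exact h1.trans_le (hH h0 (h0.trans_le hσ) hσ)
  · intro c hc
    filter_upwards [eventually_gt_atTop R] with σ hσ
    exact (upper σ hσ).trans_lt hc

theorem adm_anti_lim (k ω β R : ℝ) (hk : 0 < k) (hR : 0 < R) (F H : ℝ → ℝ)
    (hF : ∀ σ, R < σ → HasDerivAt F (σ ^ (-k - 1) * H σ) σ)
    (hH : AntitoneOn H (Set.Ioi R))
    (hlim : Tendsto (fun σ : ℝ => σ ^ k * (F σ - ω)) atTop (nhds β)) :
    Tendsto H atTop (nhds (-k * β)) := by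
  have h := adm_mono_lim k (-ω) (-β) R hk hR (fun σ => - F σ) (fun σ => - H σ)
    (fun σ hσ => by
      have := (hF σ hσ).neg
      rw [← mul_neg] at this
      exact this) hH.neg
    (by
      refine hlim.neg.congr fun σ => ?_
      ring)
  have h2 := h.neg
  simpa using h2

theorem adm_small (k b c : ℝ) (hk : 0 < k) :
    Tendsto (fun σ : ℝ => b * σ ^ (-k) + c * σ ^ (-k - 1)) atTop (nhds 0) := by
  have h1 : Tendsto (fun σ : ℝ => σ ^ (-k)) atTop (nhds 0) := tendsto_rpow_neg_atTop hk
  have h2 : Tendsto (fun σ : ℝ => σ ^ (-k - 1)) atTop (nhds 0) := by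
    have := tendsto_rpow_neg_atTop (y := k + 1) (by linarith)
    rwa [neg_add'] at this
  simpa using (h1.const_mul b).add (h2.const_mul c)

theorem adm_asymp (k b c p : ℝ) (hk : 0 < k) :
    Tendsto (fun σ : ℝ => σ ^ k * ((1 + (b * σ ^ (-k) + c * σ ^ (-k - 1))) ^ p - 1))
      atTop (nhds (p * b)) := by
  have hd : HasDerivAt (fun u : ℝ => u ^ p) p 1 := by
    simpa using Real.hasDerivAt_rpow_const (x := 1) (p := p) (Or.inl one_ne_zero)
  have h := hd.hasFDerivAt.hasFDerivWithinAt (s := Set.univ) |>.lim (l := atTop)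
    (c := fun σ : ℝ => σ ^ k) (d := fun σ : ℝ => b * σ ^ (-k) + c * σ ^ (-k - 1)) (v := b)
    ?_ ?_ ?_
  · simpa [mul_comm] using h
  · exact adm_small k b c hk
  · exact Eventually.of_forall fun _ => trivial
  · have h1 : Tendsto (fun σ : ℝ => b + c * σ ^ (-(1:ℝ))) atTop (nhds b) := by
      simpa using ((tendsto_rpow_neg_atTop (one_pos)).const_mul c).const_add b
    refine h1.congr' ?_
    filter_upwards [eventually_gt_atTop 0] with σ hσ
    rw [smul_eq_mul, mul_add]
    have e1 : σ ^ k * σ ^ (-k) = 1 := by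
      rw [← Real.rpow_add hσ, add_neg_cancel, Real.rpow_zero]
    have e2 : σ ^ k * σ ^ (-k - 1) = σ ^ (-(1:ℝ)) := by
      rw [← Real.rpow_add hσ]; congr 1; ring
    rw [← e2]
    linear_combination (-b) * e1

theorem adm_pow_fderiv {n : ℕ} (U : EuclideanSpace ℝ (Fin n) → ℝ) (p R : ℝ)
    (hpos : ∀ x : EuclideanSpace ℝ (Fin n), R < ‖x‖ → 0 < U x)
    (hU : ContDiffOn ℝ 2 U {x : EuclideanSpace ℝ (Fin n) | R < ‖x‖})
    (x : EuclideanSpace ℝ (Fin n)) (hx : R < ‖x‖) :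
    HasFDerivAt (fun y => U y ^ p) ((p * U x ^ (p - 1)) • fderiv ℝ U x) x := by
  have h1 : HasFDerivAt U (fderiv ℝ U x) x := ((hU.differentiableOn two_ne_zero).differentiableAt
    ((adm_isOpen n R).mem_nhds hx)).hasFDerivAt
  exact h1.rpow_const (Or.inl (hpos x hx).ne')

theorem adm_pow_fderiv2 {n : ℕ} (U : EuclideanSpace ℝ (Fin n) → ℝ) (p R : ℝ)
    (hpos : ∀ x : EuclideanSpace ℝ (Fin n), R < ‖x‖ → 0 < U x)
    (hU : ContDiffOn ℝ 2 U {x : EuclideanSpace ℝ (Fin n) | R < ‖x‖})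
    (x : EuclideanSpace ℝ (Fin n)) (hx : R < ‖x‖) (v w : EuclideanSpace ℝ (Fin n)) :
    fderiv ℝ (fderiv ℝ (fun y => U y ^ p)) x v w =
      p * U x ^ (p - 1) * fderiv ℝ (fderiv ℝ U) x v w
        + p * ((p - 1) * U x ^ (p - 1 - 1)) * (fderiv ℝ U x v * fderiv ℝ U x w) := by
  have hO := adm_isOpen n R
  have hev : fderiv ℝ (fun y => U y ^ p) =ᶠ[nhds x]
      fun y => (p * U y ^ (p - 1)) • fderiv ℝ U y := by
    filter_upwards [hO.mem_nhds hx] with y hy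
    exact (adm_pow_fderiv U p R hpos hU y hy).fderiv
  have hf1 : ContDiffOn ℝ 1 (fderiv ℝ U) {x : EuclideanSpace ℝ (Fin n) | R < ‖x‖} :=
    hU.fderiv_of_isOpen hO (by norm_num)
  have h2 : HasFDerivAt (fderiv ℝ U) (fderiv ℝ (fderiv ℝ U) x) x :=
    ((hf1.differentiableOn one_ne_zero).differentiableAt (hO.mem_nhds hx)).hasFDerivAt
  have h1 := (adm_pow_fderiv U (p - 1) R hpos hU x hx).const_mul p
  have h3 := h1.fun_smul h2
  rw [hev.fderiv_eq, h3.fderiv]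
  simp
  ring

theorem adm_F_asymp (n : ℕ) (k p d R b C : ℝ) (hk : 0 < k) (hp : 0 ≤ p) (hR : 0 < R)
    (hfin : μH[d] (Metric.sphere (0 : EuclideanSpace ℝ (Fin n)) 1) ≠ ⊤)
    (U : EuclideanSpace ℝ (Fin n) → ℝ)
    (hpos : ∀ x : EuclideanSpace ℝ (Fin n), R < ‖x‖ → 0 < U x)
    (hc : ContinuousOn (fun y => U y ^ p) {x : EuclideanSpace ℝ (Fin n) | R < ‖x‖})
    (hexp : ∀ x : EuclideanSpace ℝ (Fin n), R < ‖x‖ →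
      |U x - 1 - b * ‖x‖ ^ (-k)| ≤ C * ‖x‖ ^ (-k - 1)) :
    Tendsto (fun σ : ℝ => σ ^ k *
        ((∫ x in Metric.sphere (0 : EuclideanSpace ℝ (Fin n)) 1, U (σ • x) ^ p ∂(μH[d]))
          - (μH[d] (Metric.sphere (0 : EuclideanSpace ℝ (Fin n)) 1)).toReal))
      atTop (nhds ((μH[d] (Metric.sphere (0 : EuclideanSpace ℝ (Fin n)) 1)).toReal * (p * b))) := by
  set ω := (μH[d] (Metric.sphere (0 : EuclideanSpace ℝ (Fin n)) 1)).toReal with hω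
  have hω0 : 0 ≤ ω := ENNReal.toReal_nonneg
  have hm : MeasurableSet (Metric.sphere (0 : EuclideanSpace ℝ (Fin n)) 1) :=
    Metric.isClosed_sphere.measurableSet
  have hconst : ∀ c : ℝ, ∫ x in Metric.sphere (0 : EuclideanSpace ℝ (Fin n)) 1, c ∂(μH[d])
      = ω * c := by
    intro c
    rw [setIntegral_const, smul_eq_mul]; rfl
  have lo := (adm_asymp k b (-C) p hk).const_mul ω
  have hi := (adm_asymp k b C p hk).const_mul ω
  have hsm : ∀ᶠ σ : ℝ in atTop, -1 < b * σ ^ (-k) + (-C) * σ ^ (-k - 1) :=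
    (adm_small k b (-C) hk).eventually (lt_mem_nhds (show (-1:ℝ) < 0 by norm_num))
  have hbd : ∀ σ : ℝ, R < σ → ∀ x ∈ Metric.sphere (0 : EuclideanSpace ℝ (Fin n)) 1,
      1 + (b * σ ^ (-k) + (-C) * σ ^ (-k - 1)) ≤ U (σ • x) ∧
      U (σ • x) ≤ 1 + (b * σ ^ (-k) + C * σ ^ (-k - 1)) ∧ 0 < U (σ • x) := by
    intro σ hσ x hx
    have hσ0 := hR.trans hσ
    have hnorm : ‖σ • x‖ = σ := by
      rw [norm_smul, mem_sphere_zero_iff_norm.1 hx, Real.norm_eq_abs, abs_of_pos hσ0, mul_one]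
    have h := hexp (σ • x) (by rw [hnorm]; exact hσ)
    rw [hnorm, abs_le] at h
    refine ⟨by linarith [h.1], by linarith [h.2], hpos _ (by rw [hnorm]; exact hσ)⟩
  have hint : ∀ σ : ℝ, R < σ → IntegrableOn (fun x => U (σ • x) ^ p)
      (Metric.sphere (0 : EuclideanSpace ℝ (Fin n)) 1) (μH[d]) := by
    intro σ hσ
    refine adm_integrable _ _ (isCompact_sphere _ _) hfin _ ?_
    refine hc.comp (f := fun x => σ • x) (by fun_prop) ?_
    intro x hx
    rw [mem_sphere_zero_iff_norm] at hx
    simp [norm_smul, hx, abs_of_pos (hR.trans hσ), hσ]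
  have hintc : ∀ c : ℝ, IntegrableOn (fun _ => c)
      (Metric.sphere (0 : EuclideanSpace ℝ (Fin n)) 1) (μH[d]) := fun c =>
    adm_integrable _ _ (isCompact_sphere _ _) hfin _ continuousOn_const
  refine tendsto_of_tendsto_of_tendsto_of_le_of_le' lo hi ?_ ?_
  · filter_upwards [eventually_gt_atTop R, hsm] with σ hσ hs
    have hσ0 := hR.trans hσ
    have h1 : ω * (1 + (b * σ ^ (-k) + (-C) * σ ^ (-k - 1))) ^ p ≤
        ∫ x in Metric.sphere (0 : EuclideanSpace ℝ (Fin n)) 1, U (σ • x) ^ p ∂(μH[d]) := by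
      rw [← hconst]
      refine setIntegral_mono_on (hintc _) (hint σ hσ) hm fun x hx => ?_
      exact Real.rpow_le_rpow (by linarith) (hbd σ hσ x hx).1 hp
    have h2 : 0 ≤ σ ^ k := by positivity
    have h3 := mul_le_mul_of_nonneg_left (sub_le_sub_right h1 ω) h2
    refine le_trans (le_of_eq ?_) h3
    ring
  · filter_upwards [eventually_gt_atTop R] with σ hσ
    have hσ0 := hR.trans hσ
    have h1 : (∫ x in Metric.sphere (0 : EuclideanSpace ℝ (Fin n)) 1, U (σ • x) ^ p ∂(μH[d]))
        ≤ ω * (1 + (b * σ ^ (-k) + C * σ ^ (-k - 1))) ^ p := by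
      rw [← hconst]
      refine setIntegral_mono_on (hint σ hσ) (hintc _) hm fun x hx => ?_
      exact Real.rpow_le_rpow (hbd σ hσ x hx).2.2.le (hbd σ hσ x hx).2.1 hp
    have h2 : 0 ≤ σ ^ k := by positivity
    have h3 := mul_le_mul_of_nonneg_left (sub_le_sub_right h1 ω) h2
    refine le_trans h3 (le_of_eq ?_)
    ring

theorem adm_integrand (n : ℕ) (U : EuclideanSpace ℝ (Fin n) → ℝ) (σ : ℝ) (hσ : 0 < σ)
    (x : EuclideanSpace ℝ (Fin n))
    (hd : DifferentiableAt ℝ (fun y => U y ^ ((4 : ℝ) / ((n : ℝ) - 2))) (σ • x)) :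
    (∑ i : Fin n, ∑ j : Fin n,
      (fderiv ℝ (fun y => confMetric n U y i j) (σ • x) (EuclideanSpace.single i (1:ℝ))
        - fderiv ℝ (fun y => confMetric n U y i i) (σ • x)
            (EuclideanSpace.single j (1:ℝ))) * ((σ • x) j / σ)) =
    -((n:ℝ) - 1) * fderiv ℝ (fun y => U y ^ ((4 : ℝ) / ((n : ℝ) - 2))) (σ • x) x := by
  set l := fderiv ℝ (fun y => U y ^ ((4 : ℝ) / ((n : ℝ) - 2))) (σ • x) with hl
  have h1 : ∀ i j : Fin n, fderiv ℝ (fun y => confMetric n U y i j) (σ • x) =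
      if i = j then l else 0 := by
    intro i j
    by_cases h : i = j
    · simp [confMetric, h, hl]
    · simp [confMetric, h]
  have hx : ∀ j, (σ • x) j / σ = x j := by
    intro j
    rw [PiLp.smul_apply, smul_eq_mul]; field_simp
  rw [adm_lin_sum l x]
  have h2 : ∀ i j : Fin n, (fderiv ℝ (fun y => confMetric n U y i j) (σ • x)
        (EuclideanSpace.single i (1:ℝ))
        - fderiv ℝ (fun y => confMetric n U y i i) (σ • x)
            (EuclideanSpace.single j (1:ℝ))) * ((σ • x) j / σ) =
      (if i = j then x j * l (EuclideanSpace.single i (1:ℝ)) else 0)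
        - x j * l (EuclideanSpace.single j (1:ℝ)) := by
    intro i j
    rw [hx, h1, h1, if_pos rfl]
    by_cases h : i = j
    · simp [h]
    · simp [h]; ring
  simp only [h2, Finset.sum_sub_distrib, Finset.sum_ite_eq, Finset.mem_univ, if_true,
    Finset.sum_const, Finset.card_univ, Fintype.card_fin, nsmul_eq_mul]
  ring

/-- the ADM mass of a harmonically flat end with conformal factor
`U = 1 + b‖x‖^{2-n} + O(‖x‖^{1-n})` exists and equals `2b`. -/
theorem adm_mass_of_harmonically_flat_end
    (n : ℕ) (hn : 3 ≤ n) (R b C : ℝ) (hR : 0 < R) (hC : 0 < C)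
    (U : EuclideanSpace ℝ (Fin n) → ℝ)
    (hpos : ∀ x : EuclideanSpace ℝ (Fin n), R < ‖x‖ → 0 < U x)
    (hharm : HarmonicOnSet U {x : EuclideanSpace ℝ (Fin n) | R < ‖x‖})
    (hexp : ∀ x : EuclideanSpace ℝ (Fin n), R < ‖x‖ →
      |U x - 1 - b * ‖x‖ ^ ((2 : ℝ) - n)| ≤ C * ‖x‖ ^ ((1 : ℝ) - n)) :
    Tendsto
      (fun σ : ℝ =>
        (1 / (2 * ((n : ℝ) - 1) *
          (μH[(n : ℝ) - 1] (Metric.sphere (0 : EuclideanSpace ℝ (Fin n)) 1)).toReal)) *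
        ∫ x in Metric.sphere (0 : EuclideanSpace ℝ (Fin n)) σ,
          (∑ i : Fin n, ∑ j : Fin n,
            (fderiv ℝ (fun y => confMetric n U y i j) x (EuclideanSpace.single i (1:ℝ))
              - fderiv ℝ (fun y => confMetric n U y i i) x
                  (EuclideanSpace.single j (1:ℝ))) * (x j / σ))
          ∂(μH[(n : ℝ) - 1]))
      atTop (nhds (2 * b)) := by
  have hn3 : (3:ℝ) ≤ n := by exact_mod_cast hn
  have hO := adm_isOpen n R
  have hω : μH[(n : ℝ) - 1] (Metric.sphere (0 : EuclideanSpace ℝ (Fin n)) 1) ≠ 0 ∧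
      μH[(n : ℝ) - 1] (Metric.sphere (0 : EuclideanSpace ℝ (Fin n)) 1) ≠ ⊤ := by
    obtain ⟨m, rfl⟩ : ∃ m, n = m + 1 := ⟨n - 1, by omega⟩
    rw [Nat.cast_add, Nat.cast_one, add_sub_cancel_right]
    exact ⟨adm_sphere_pos m, adm_sphere_fin m⟩
  obtain ⟨hω0, hfin⟩ := hω
  set ω := (μH[(n : ℝ) - 1] (Metric.sphere (0 : EuclideanSpace ℝ (Fin n)) 1)).toReal with hωdef
  have hωpos : 0 < ω := ENNReal.toReal_pos hω0 hfin
  set p : ℝ := (4 : ℝ) / ((n : ℝ) - 2) with hp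
  have hk : (0:ℝ) < (n:ℝ) - 2 := by linarith
  have hp0 : 0 < p := by positivity
  have hm : MeasurableSet (Metric.sphere (0 : EuclideanSpace ℝ (Fin n)) 1) :=
    Metric.isClosed_sphere.measurableSet
  have hU : ContDiffOn ℝ 2 U {x : EuclideanSpace ℝ (Fin n) | R < ‖x‖} :=
    hharm.1.of_le (WithTop.coe_le_coe.2 (le_top : (2 : ℕ∞) ≤ ⊤))
  have hf : ContDiffOn ℝ 2 (fun y => U y ^ p) {x : EuclideanSpace ℝ (Fin n) | R < ‖x‖} :=
    hU.rpow_const_of_ne fun x hx => (hpos x hx).ne'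
  have hf1 : ContDiffOn ℝ 1 (fun y => U y ^ p) {x : EuclideanSpace ℝ (Fin n) | R < ‖x‖} :=
    hf.of_le (by norm_num)
  have hmem : ∀ s : ℝ, R < s → ∀ x ∈ Metric.sphere (0 : EuclideanSpace ℝ (Fin n)) 1,
      R < ‖s • x‖ := by
    intro s hs x hx
    rw [mem_sphere_zero_iff_norm] at hx
    simp [norm_smul, hx, abs_of_pos (hR.trans hs), hs]
  -- the Laplacian of the power
  have hlap : ∀ x : EuclideanSpace ℝ (Fin n), R < ‖x‖ →
      ∑ i, fderiv ℝ (fderiv ℝ (fun y => U y ^ p)) x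
        (EuclideanSpace.single i (1:ℝ)) (EuclideanSpace.single i (1:ℝ)) =
      (p - 1) * (p * U x ^ (p - 1 - 1) * ∑ i, (fderiv ℝ U x (EuclideanSpace.single i (1:ℝ))) ^ 2) := by
    intro x hx
    have h0 := hharm.2 x hx
    have hd : DifferentiableAt ℝ (fderiv ℝ U) x :=
      ((hU.fderiv_of_isOpen hO (m := 1) (by norm_num)).differentiableOn
        one_ne_zero).differentiableAt (hO.mem_nhds hx)
    have h1 : ∑ i : Fin n, fderiv ℝ (fderiv ℝ U) x
        (EuclideanSpace.single i (1:ℝ)) (EuclideanSpace.single i (1:ℝ)) = 0 := by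
      rw [← h0]
      refine Finset.sum_congr rfl fun i _ => ?_
      rw [fderiv_clm_apply hd (differentiableAt_const _)]
      simp
    simp only [adm_pow_fderiv2 U p R hpos hU x hx, Finset.sum_add_distrib, ← Finset.mul_sum, h1]
    simp only [← pow_two]
    ring
  have hlap0 : ∀ x : EuclideanSpace ℝ (Fin n), R < ‖x‖ →
      0 ≤ p * U x ^ (p - 1 - 1) *
        ∑ i, (fderiv ℝ U x (EuclideanSpace.single i (1:ℝ))) ^ 2 := by
    intro x hx
    have := hpos x hx
    have h2 : 0 ≤ ∑ i, (fderiv ℝ U x (EuclideanSpace.single i (1:ℝ))) ^ 2 :=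
      Finset.sum_nonneg fun i _ => sq_nonneg _
    positivity
  set F : ℝ → ℝ := fun s => ∫ x in Metric.sphere (0 : EuclideanSpace ℝ (Fin n)) 1,
    U (s • x) ^ p ∂(μH[(n : ℝ) - 1]) with hFdef
  set H : ℝ → ℝ := fun s => s ^ ((n:ℝ) - 1) *
      ∫ x in Metric.sphere (0 : EuclideanSpace ℝ (Fin n)) 1,
        fderiv ℝ (fun y => U y ^ p) (s • x) x ∂(μH[(n : ℝ) - 1]) with hHdef
  have hHd : ∀ σ, R < σ → HasDerivAt H _ σ := fun σ hσ =>
    adm_flux ((n:ℝ) - 1) hfin R hR (fun y => U y ^ p) hf σ hσ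
  have hFd : ∀ σ, R < σ → HasDerivAt F (σ ^ (-((n:ℝ) - 2) - 1) * H σ) σ := by
    intro σ hσ
    have hσ0 := hR.trans hσ
    refine (adm_radial ((n:ℝ) - 1) hfin R hR (fun y => U y ^ p) hf1 σ hσ).congr_deriv ?_
    rw [hHdef, ← mul_assoc, ← Real.rpow_add hσ0]
    have : -((n:ℝ) - 2) - 1 + ((n:ℝ) - 1) = 0 := by ring
    rw [this, Real.rpow_zero, one_mul]
  have hFlim := adm_F_asymp n ((n:ℝ) - 2) p ((n:ℝ) - 1) R b C hk hp0.le hR hfin U hpos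
    hf.continuousOn (by
      intro x hx
      have h := hexp x hx
      have e1 : -((n:ℝ) - 2) = 2 - n := by ring
      have e2 : (2:ℝ) - n - 1 = 1 - n := by ring
      rw [e1, e2]
      exact h)
  have hHlim : Tendsto H atTop (nhds (-((n:ℝ) - 2) * (ω * (p * b)))) := by
    rcases le_total 1 p with h1 | h1
    · refine adm_mono_lim ((n:ℝ) - 2) ω _ R hk hR F H hFd ?_ hFlim
      refine monotoneOn_of_deriv_nonneg (convex_Ioi R) ?_ ?_ ?_
      · intro σ hσ
        exact (hHd σ hσ).continuousAt.continuousWithinAt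
      · intro σ hσ
        rw [interior_Ioi] at hσ
        exact (hHd σ hσ).differentiableAt.differentiableWithinAt
      · intro σ hσ
        rw [interior_Ioi] at hσ
        rw [(hHd σ hσ).deriv]
        have hσ0 : 0 < σ := hR.trans hσ
        refine mul_nonneg (by positivity) (setIntegral_nonneg hm fun x hx => ?_)
        rw [hlap _ (hmem σ hσ x hx)]
        exact mul_nonneg (by linarith) (hlap0 _ (hmem σ hσ x hx))
    · refine adm_anti_lim ((n:ℝ) - 2) ω _ R hk hR F H hFd ?_ hFlim
      refine antitoneOn_of_deriv_nonpos (convex_Ioi R) ?_ ?_ ?_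
      · intro σ hσ
        exact (hHd σ hσ).continuousAt.continuousWithinAt
      · intro σ hσ
        rw [interior_Ioi] at hσ
        exact (hHd σ hσ).differentiableAt.differentiableWithinAt
      · intro σ hσ
        rw [interior_Ioi] at hσ
        rw [(hHd σ hσ).deriv]
        have hσ0 : 0 < σ := hR.trans hσ
        refine mul_nonpos_of_nonneg_of_nonpos (by positivity)
          (setIntegral_nonpos hm fun x hx => ?_)
        rw [hlap _ (hmem σ hσ x hx)]
        exact mul_nonpos_of_nonpos_of_nonneg (by linarith) (hlap0 _ (hmem σ hσ x hx))
  have hfinal := hHlim.const_mul (-1 / (2 * ω))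
  have hval : -1 / (2 * ω) * (-((n:ℝ) - 2) * (ω * (p * b))) = 2 * b := by
    rw [hp]; field_simp; ring
  rw [hval] at hfinal
  refine hfinal.congr' ?_
  filter_upwards [eventually_gt_atTop R] with σ hσ
  have hσ0 : 0 < σ := hR.trans hσ
  rw [adm_scaling n (by omega) σ hσ0]
  have hcongr : ∫ x in Metric.sphere (0 : EuclideanSpace ℝ (Fin n)) 1,
      (∑ i : Fin n, ∑ j : Fin n,
        (fderiv ℝ (fun y => confMetric n U y i j) (σ • x) (EuclideanSpace.single i (1:ℝ))
          - fderiv ℝ (fun y => confMetric n U y i i) (σ • x)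
              (EuclideanSpace.single j (1:ℝ))) * ((σ • x) j / σ)) ∂(μH[(n : ℝ) - 1]) =
      ∫ x in Metric.sphere (0 : EuclideanSpace ℝ (Fin n)) 1,
        -((n:ℝ) - 1) * fderiv ℝ (fun y => U y ^ p) (σ • x) x ∂(μH[(n : ℝ) - 1]) := by
    refine setIntegral_congr_fun hm fun x hx => ?_
    exact adm_integrand n U σ hσ0 x ((hf.differentiableOn two_ne_zero).differentiableAt
      (hO.mem_nhds (hmem σ hσ x hx)))
  rw [hcongr, integral_const_mul, hHdef]
  have hn1 : (n:ℝ) - 1 ≠ 0 := by linarith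
  field_simp
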